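/- arXiv:1104.1762 — 5 statements merged into one kernel-verified Lean document; each statement's English description precedes it below -/
import Mathlib

section
/- Let p be a prime and let f : R → S be a flat ring homomorphism between commutative rings of characteristic p. Then the induced ring homomorphism PerfectClosure R p → PerfectClosure S p between the perfections is flat; moreover, if f is faithfully flat, then the induced homomorphism is faithfully flat. -/
/-!
The perfection `R → R_perf` has two relevant features: it is `p`-radical (every element of `R_perf`
has a `p ^ n`-th power coming from `R`, and the kernel consists of elements killed by some
`p ^ z`-th power), and Frobenius is bijective on `R_perf`.

*Flatness* follows from the equational criterion. Raising a relation `∑ rᵢ • sᵢ = 0` in `S_perf` to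
a suitable `p ^ N`-th power turns it into a relation in `S` with coefficients in `R`. This relation
is trivial since `S` is flat over `R`; extracting `p ^ N`-th roots of all the data witnessing this
in `R_perf` and `S_perf` shows that the original relation is trivial.

*Faithful flatness* is flatness together with surjectivity on prime spectra, and `p`-radical maps
induce homeomorphisms on prime spectra, so surjectivity of `Spec S → Spec R` passes to the
perfections.

Both parts are proved for an arbitrary commutative square whose vertical maps are `p`-radical.
-/

section PRadical

variable {A B C D : Type*} [CommRing A] [CommRing B] [CommRing C] [CommRing D]

/-- A uniform exponent can be chosen for finitely many elements of a `p`-radical extension. -/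
lemma exists_uniform_pow_mem (p : ℕ) (i : A →+* C) [IsPRadical i p] {ι : Type*} [Fintype ι]
    (x : ι → C) : ∃ n : ℕ, ∀ m, n ≤ m → ∃ a : ι → A, ∀ k, i (a k) = x k ^ p ^ m := by
  choose n y hy using fun k ↦ IsPRadical.pow_mem i p (x k)
  refine ⟨Finset.univ.sup n, fun m hm ↦ ⟨fun k ↦ y k ^ p ^ (m - n k), fun k ↦ ?_⟩⟩
  have hk : n k ≤ m := (Finset.le_sup (f := n) (Finset.mem_univ k)).trans hm
  rw [map_pow, hy, ← pow_mul, ← pow_add, Nat.add_sub_cancel' hk]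

/-- Flatness passes from `f` to a ring homomorphism `φ` between perfect rings that are
`p`-radical over the source and target of `f`. -/
lemma flat_of_isPRadical (p : ℕ) [ExpChar A p] [ExpChar B p] [ExpChar C p] [ExpChar D p]
    [PerfectRing C p] [PerfectRing D p] (f : A →+* B) (i : A →+* C) (j : B →+* D) (φ : C →+* D)
    [IsPRadical i p] [IsPRadical j p] (comm : ∀ a, φ (i a) = j (f a)) (hf : f.Flat) :
    φ.Flat := by
  let _ := f.toAlgebra
  let _ := φ.toAlgebra
  have : Module.Flat A B := hf
  change Module.Flat C D
  have smul_AB (a : A) (b : B) : a • b = f a * b := Algebra.smul_def a b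
  have smul_CD (c : C) (d : D) : c • d = φ c * d := Algebra.smul_def c d
  refine Module.Flat.of_forall_isTrivialRelation fun {l r s} h ↦ ?_
  obtain ⟨n₁, h₁⟩ := exists_uniform_pow_mem p i r
  obtain ⟨n₂, h₂⟩ := exists_uniform_pow_mem p j s
  obtain ⟨a, ha⟩ := h₁ (max n₁ n₂) (le_max_left _ _)
  obtain ⟨b, hb⟩ := h₂ (max n₁ n₂) (le_max_right _ _)
  generalize max n₁ n₂ = n at ha hb
  have hker : j (∑ k, f (a k) * b k) = 0 := by
    have := congrArg (iterateFrobenius D p n) h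
    rw [map_sum, map_zero] at this
    simpa [smul_CD, iterateFrobenius_def, ← comm, ha, hb, mul_pow] using this
  obtain ⟨z, hz⟩ := mem_pNilradical.1 (IsPRadical.ker_le j p hker)
  have hrel : ∑ k, (a k ^ p ^ z) • (b k ^ p ^ z) = 0 := by
    rw [← iterateFrobenius_def, map_sum] at hz
    simpa [smul_AB, iterateFrobenius_def, mul_pow] using hz
  have htriv : Module.IsTrivialRelation (fun k ↦ a k ^ p ^ z) (fun k ↦ b k ^ p ^ z) :=
    Module.Flat.isTrivialRelation_of_sum_smul_eq_zero hrel
  obtain ⟨q, c, y, hy, hc⟩ := htriv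
  beta_reduce at hy hc
  -- The witnesses over `C` and `D` are the `p ^ (n + z)`-th roots of those over `A` and `B`.
  choose c' hc' using fun k m ↦ (bijective_iterateFrobenius C p (n + z)).2 (i (c k m))
  choose y' hy' using fun m ↦ (bijective_iterateFrobenius D p (n + z)).2 (j (y m))
  have hr (k) : iterateFrobenius C p (n + z) (r k) = i (a k ^ p ^ z) := by
    rw [iterateFrobenius_def, map_pow, ha, ← pow_mul, ← pow_add]
  have hs (k) : iterateFrobenius D p (n + z) (s k) = j (b k ^ p ^ z) := by
    rw [iterateFrobenius_def, map_pow, hb, ← pow_mul, ← pow_add]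
  refine ⟨q, c', y', fun k ↦ (bijective_iterateFrobenius D p (n + z)).1 ?_,
    fun m ↦ (bijective_iterateFrobenius C p (n + z)).1 ?_⟩
  · rw [hs, hy, map_sum, map_sum]
    refine Finset.sum_congr rfl fun m _ ↦ ?_
    rw [smul_AB, smul_CD, map_mul, map_mul, hy', ← RingHom.map_iterateFrobenius, hc', comm]
  · simp only [map_sum, map_mul, hr, hc', map_zero]
    simpa using congrArg i (hc m)

lemma isHomeomorph_comap_of_isPRadical (p : ℕ) (hp : 0 < p) (i : A →+* C) [IsPRadical i p] :
    IsHomeomorph (PrimeSpectrum.comap i) :=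
  PrimeSpectrum.isHomeomorph_comap i
    (fun x ↦ let ⟨n, y, hy⟩ := IsPRadical.pow_mem i p x; ⟨p ^ n, pow_pos hp n, y, hy⟩)
    fun _ ha ↦ let ⟨n, hn⟩ := mem_pNilradical.1 (IsPRadical.ker_le i p ha); ⟨p ^ n, hn⟩

lemma comap_surjective_of_isPRadical (p : ℕ) (hp : 0 < p) (f : A →+* B) (i : A →+* C)
    (j : B →+* D) (φ : C →+* D) [IsPRadical i p] [IsPRadical j p]
    (comm : φ.comp i = j.comp f) (hf : Function.Surjective (PrimeSpectrum.comap f)) :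
    Function.Surjective (PrimeSpectrum.comap φ) := by
  intro x
  obtain ⟨y, hy⟩ := hf (PrimeSpectrum.comap i x)
  obtain ⟨w, rfl⟩ := (isHomeomorph_comap_of_isPRadical p hp j).surjective y
  refine ⟨w, (isHomeomorph_comap_of_isPRadical p hp i).injective ?_⟩
  rw [← hy, ← PrimeSpectrum.comap_comp_apply, ← PrimeSpectrum.comap_comp_apply, comm]

end PRadical



/-- Let `p` be a prime and let `f : R → S` be a flat ring homomorphism between commutative
rings of characteristic `p`. Then the induced ring homomorphism
`PerfectClosure R p → PerfectClosure S p` between the perfections is flat; moreover, if `f` is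
faithfully flat, then the induced homomorphism is faithfully flat. -/
theorem stmt_0 (p : ℕ) [Fact p.Prime] (R S : Type*) [CommRing R] [CommRing S]
    [CharP R p] [CharP S p] (f : R →+* S) (hf : f.Flat) :
    (PerfectClosure.lift R p (PerfectClosure S p) ((PerfectClosure.of S p).comp f)).Flat ∧
      (@Module.FaithfullyFlat R S _ _ f.toAlgebra.toModule →
        @Module.FaithfullyFlat (PerfectClosure R p) (PerfectClosure S p) _ _
          ((PerfectClosure.lift R p (PerfectClosure S p)
            ((PerfectClosure.of S p).comp f)).toAlgebra.toModule)) := by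
  have hp := (Fact.out : p.Prime).pos
  have comm : (PerfectClosure.lift R p (PerfectClosure S p) ((PerfectClosure.of S p).comp f)).comp
      (PerfectClosure.of R p) = (PerfectClosure.of S p).comp f :=
    (PerfectClosure.lift R p (PerfectClosure S p)).symm_apply_apply _
  have flat := flat_of_isPRadical p f (PerfectClosure.of R p) (PerfectClosure.of S p)
    (PerfectClosure.lift R p (PerfectClosure S p) ((PerfectClosure.of S p).comp f))
    (fun a ↦ RingHom.congr_fun comm a) hf
  refine ⟨flat, fun h ↦ ?_⟩
  exact RingHom.FaithfullyFlat.iff_flat_and_comap_surjective.2 ⟨flat,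
    comap_surjective_of_isPRadical p hp f _ _ _ comm
      (RingHom.FaithfullyFlat.iff_flat_and_comap_surjective.1 h).2⟩
end

section
/- Let p be a prime, let R be a perfect commutative ring of characteristic p, and let S be a perfect commutative R-algebra that is faithfully flat as an R-module. Then for every n ≥ 1, the ring of truncated Witt vectors W_n(S) is faithfully flat as a module over W_n(R) (via the functorially induced ring homomorphism W_n(R) → W_n(S)). -/
/-!
`W(S)` is `p`-torsion free with `W(S)/p = S`, similarly for `R`, and `W_n = W/p^n`, because both
rings are perfect. Flatness of `W_n(S)` over `W_n(R)` is verified through the equational criterion: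
every relation `∑ fᵢ xᵢ ∈ p^n W(S)` is trivial modulo `p^n` (`exists_trivial_mod_pow`).

This goes by induction on `n`. Given a relation modulo `p^(n+1)`, reduce it modulo `p` and use
flatness of `S` over `R`: after lifting, `xᵢ = ∑ⱼ aᵢⱼ yⱼ + p zᵢ` with `∑ᵢ fᵢ aᵢⱼ = p gⱼ`.
Then `p (∑ⱼ gⱼ yⱼ + ∑ᵢ fᵢ zᵢ)` lies in `p^(n+1) W(S)`, so torsion-freeness gives a relation modulo
`p^n` among the `yⱼ` and `zᵢ`, which is trivial by induction; substituting the resulting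
expressions for `yⱼ` and `zᵢ` trivialises the original relation.

For faithfulness, a proper ideal `I` of `W_n(R)` generating the unit ideal of `W_n(S)` would have
an image in `R` generating the unit ideal of `S`. By faithful flatness of `S` this image contains
`1`, so `I` contains an element of `1 + ker (W_n(R) → R)`, a unit since that kernel is nil.
-/

section Algebra

variable {A B R S : Type*} [CommRing A] [CommRing B] [CommRing R] [CommRing S] [Algebra R S]

/-- Let `φ : A → B` lift a flat map `R = A/ϖ → S = B/ϖ`, with `ϖ` a nonzerodivisor on `B`.
Then a relation `∑ fᵢ xᵢ ≡ 0` in `B` modulo `ϖ^n` comes from relations among the `fᵢ`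
modulo `ϖ^n`. The expressions for the `xᵢ` can be taken to be exact, not just modulo `ϖ^n`. -/
theorem exists_trivial_mod_pow [Module.Flat R S] (φ : A →+* B) (σ : A →+* R) (τ : B →+* S)
    (hσ : Function.Surjective σ) (hτ : Function.Surjective τ)
    (hcomm : ∀ a, τ (φ a) = algebraMap R S (σ a)) (ϖ : A)
    (hσker : ∀ a, σ a = 0 → ϖ ∣ a) (hτker : ∀ b, τ b = 0 ↔ φ ϖ ∣ b)
    (hreg : ∀ b, φ ϖ * b = 0 → b = 0) (n : ℕ) :
    ∀ {ι : Type} [Fintype ι] (f : ι → A) (x : ι → B), φ ϖ ^ n ∣ ∑ i, φ (f i) * x i →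
      ∃ (k : ℕ) (a : ι → Fin k → A) (y : Fin k → B),
        (∀ i, x i = ∑ j, φ (a i j) * y j) ∧ ∀ j, ϖ ^ n ∣ ∑ i, f i * a i j := by
  classical
  induction n with
  | zero =>
    intro ι _ f x _
    let e := Fintype.equivFin ι
    refine ⟨_, fun i j ↦ if e i = j then 1 else 0, fun j ↦ x (e.symm j), fun i ↦ ?_, by simp⟩
    simp [apply_ite φ]
  | succ n ih =>
    intro ι _ f x h
    have h0 : ∑ i, σ (f i) • τ (x i) = 0 := by
      have : τ (∑ i, φ (f i) * x i) = 0 :=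
        (hτker _).2 ((Dvd.intro_left _ (pow_succ (φ ϖ) n).symm).trans h)
      simpa [hcomm, Algebra.smul_def] using this
    obtain ⟨k, a', y', hx, ha⟩ :=
      Module.Flat.isTrivialRelation_of_sum_smul_eq_zero (R := R) (M := S) h0
    choose a haa using fun i j ↦ hσ (a' i j)
    choose y hy using fun j ↦ hτ (y' j)
    have hz (i) : φ ϖ ∣ x i - ∑ j, φ (a i j) * y j := by
      rw [← hτker]
      simp [hcomm, haa, hy, hx i, Algebra.smul_def]
    have hg (j) : ϖ ∣ ∑ i, f i * a i j := by
      apply hσker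
      simpa [haa] using ha j
    choose z hz using hz
    choose g hg using hg
    have hsum : ∑ i, φ (f i) * x i = φ ϖ * (∑ j, φ (g j) * y j + ∑ i, φ (f i) * z i) := by
      have hx' (i) : x i = ∑ j, φ (a i j) * y j + φ ϖ * z i := by rw [← hz]; ring
      have hg' (j) : φ ϖ * (φ (g j) * y j) = ∑ i, φ (f i) * (φ (a i j) * y j) := by
        rw [← mul_assoc, ← map_mul, ← hg, map_sum, Finset.sum_mul]
        simp [mul_assoc]
      simp_rw [mul_add, Finset.mul_sum, hg']
      rw [Finset.sum_comm, ← Finset.sum_add_distrib]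
      refine Finset.sum_congr rfl fun i _ ↦ ?_
      rw [hx' i, mul_add, Finset.mul_sum]
      ring
    have hdvd : φ ϖ ^ n ∣ ∑ j, φ (g j) * y j + ∑ i, φ (f i) * z i := by
      obtain ⟨t, ht⟩ := h
      refine ⟨t, sub_eq_zero.1 (hreg _ ?_)⟩
      rw [mul_sub, ← hsum, ht]
      ring
    obtain ⟨l, c, w, hc, hcd⟩ := ih (Sum.elim g f) (Sum.elim y z) (by simpa using hdvd)
    refine ⟨l, fun i m ↦ ∑ j, a i j * c (.inl j) m + ϖ * c (.inr i) m, w, fun i ↦ ?_, fun m ↦ ?_⟩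
    · have hyc (j) : y j = _ := hc (.inl j)
      have hzc : z i = _ := hc (.inr i)
      rw [← sub_add_cancel (x i) (∑ j, φ (a i j) * y j), hz i, hzc]
      simp_rw [hyc, map_add, map_sum, map_mul, add_mul, Finset.sum_mul, Finset.mul_sum]
      rw [Finset.sum_add_distrib, add_comm, Finset.sum_comm]
      simp [mul_assoc]
    · obtain ⟨t, ht⟩ := hcd m
      refine ⟨t, ?_⟩
      rw [pow_succ', mul_assoc, ← ht, Fintype.sum_sum_type]
      have hg' (j) : ϖ * (g j * c (.inl j) m) = ∑ i, f i * (a i j * c (.inl j) m) := by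
        rw [← mul_assoc, ← hg, Finset.sum_mul]
        simp [mul_assoc]
      simp_rw [Sum.elim_inl, Sum.elim_inr, mul_add, Finset.mul_sum, hg', Finset.sum_add_distrib]
      rw [Finset.sum_comm]
      congr 1
      exact Finset.sum_congr rfl fun i _ ↦ by ring

/-- Faithfulness of a flat algebra can be checked after reduction modulo a nil ideal: if `A → R` is
surjective with nil kernel and `R → S` is faithfully flat, then a flat `A`-algebra `B` mapping
compatibly to `S` is faithfully flat. -/
theorem faithfullyFlat_of_nil_ker [Module.FaithfullyFlat R S] [Algebra A B] [Module.Flat A B]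
    (σ : A →+* R) (τ : B →+* S) (hσ : Function.Surjective σ)
    (hcomm : ∀ a, τ (algebraMap A B a) = algebraMap R S (σ a))
    (hnil : ∀ a, σ a = 0 → IsNilpotent a) : Module.FaithfullyFlat A B := by
  rw [Module.FaithfullyFlat.iff_flat_and_ideal_smul_eq_top]
  refine ⟨inferInstance, fun I hI ↦ ?_⟩
  have hI' : I.map (algebraMap A B) = ⊤ := by
    rw [Ideal.smul_top_eq_map] at hI
    exact (Submodule.restrictScalars_eq_top_iff A B B).1 hI
  have hS : (I.map σ).map (algebraMap R S) = ⊤ := by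
    have hc : (algebraMap R S).comp σ = τ.comp (algebraMap A B) :=
      RingHom.ext fun a ↦ (hcomm a).symm
    rw [Ideal.map_map, hc, ← Ideal.map_map, hI', Ideal.map_top]
  have hR : I.map σ = ⊤ := by
    rw [← Ideal.comap_map_eq_self_of_faithfullyFlat (B := S) (I.map σ), hS, Ideal.comap_top]
  obtain ⟨a, ha, ha1⟩ := (Ideal.mem_map_iff_of_surjective σ hσ).1
    (hR ▸ Submodule.mem_top : (1 : R) ∈ I.map σ)
  have hunit : IsUnit a := by
    have := (hnil (1 - a) (by simp [ha1])).isUnit_one_sub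
    rwa [sub_sub_cancel] at this
  exact Ideal.eq_top_of_isUnit_mem I ha hunit

end Algebra

section Witt

open WittVector

variable (p : ℕ) [Fact p.Prime] (R : Type*) [CommRing R]

/-- The projection `W_n(R) → R` to the zeroth coefficient, for `1 ≤ n`. -/
theorem exists_truncated_constantCoeff {n : ℕ} (hn : 1 ≤ n) :
    ∃ σ : TruncatedWittVector p n R →+* R, ∀ x : WittVector p R,
      σ (WittVector.truncate n x) = x.coeff 0 := by
  have hker : RingHom.ker (WittVector.truncate (p := p) (R := R) n) ≤
      RingHom.ker (constantCoeff (p := p) (R := R)) := fun x hx ↦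
    (mem_ker_truncate n x).1 hx 0 hn
  exact ⟨RingHom.liftOfSurjective _ (truncate_surjective p n R) ⟨_, hker⟩,
    fun x ↦ RingHom.liftOfRightInverse_comp_apply _ _ _ ⟨_, hker⟩ x⟩

theorem truncate_eq_zero_iff_pow_dvd [CharP R p] [PerfectRing R p] (n : ℕ) (x : WittVector p R) :
    WittVector.truncate n x = 0 ↔ (p : WittVector p R) ^ n ∣ x := by
  rw [← RingHom.mem_ker, mem_ker_truncate, ← mem_span_p_pow_iff_le_coeff_eq_zero,
    Ideal.mem_span_singleton]

theorem coeff_zero_eq_zero_iff_dvd [CharP R p] [PerfectRing R p] (x : WittVector p R) :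
    x.coeff 0 = 0 ↔ (p : WittVector p R) ∣ x := by
  rw [← mem_span_p_iff_coeff_zero_eq_zero, Ideal.mem_span_singleton]

end Witt

/-- Let `p` be a prime, let `R` be a perfect commutative ring of characteristic `p`, and let
`S` be a perfect commutative `R`-algebra that is faithfully flat as an `R`-module. Then for
every `n ≥ 1`, the ring of truncated Witt vectors `Wₙ(S)` is faithfully flat as a module over
`Wₙ(R)`, via the functorially induced ring homomorphism `Wₙ(R) → Wₙ(S)` (the unique ring
homomorphism compatible with the truncation maps and `WittVector.map (algebraMap R S)`). -/
theorem stmt_2 (p : ℕ) [Fact p.Prime] (R S : Type*) [CommRing R] [CommRing S]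
    [CharP R p] [CharP S p] [PerfectRing R p] [PerfectRing S p]
    [Algebra R S] [Module.FaithfullyFlat R S] (n : ℕ) (hn : 1 ≤ n) :
    ∃ g : TruncatedWittVector p n R →+* TruncatedWittVector p n S,
      g.comp (WittVector.truncate n) =
        (WittVector.truncate n).comp (WittVector.map (algebraMap R S)) ∧
      @Module.FaithfullyFlat (TruncatedWittVector p n R) (TruncatedWittVector p n S) _ _
        g.toAlgebra.toModule := by
  set φ : WittVector p R →+* WittVector p S := WittVector.map (algebraMap R S) with hφ
  have hR := WittVector.truncate_surjective p n R
  have hS := WittVector.truncate_surjective p n S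
  have hφp : φ (p : WittVector p R) = p := map_natCast φ p
  have hker : RingHom.ker (WittVector.truncate (p := p) (R := R) n) ≤
      RingHom.ker ((WittVector.truncate n).comp φ) := fun x hx ↦ by
    rw [RingHom.mem_ker, RingHom.comp_apply, truncate_eq_zero_iff_pow_dvd, ← hφp, ← map_pow]
    exact map_dvd φ ((truncate_eq_zero_iff_pow_dvd p R n x).1 hx)
  let g : TruncatedWittVector p n R →+* TruncatedWittVector p n S :=
    RingHom.liftOfSurjective _ hR ⟨_, hker⟩
  have hg (x) : g (WittVector.truncate n x) = WittVector.truncate n (φ x) :=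
    RingHom.liftOfRightInverse_comp_apply _ _ _ ⟨_, hker⟩ x
  refine ⟨g, RingHom.ext hg, ?_⟩
  let := g.toAlgebra
  have halg (x) : algebraMap (TruncatedWittVector p n R) (TruncatedWittVector p n S) x = g x := rfl
  have hflat : Module.Flat (TruncatedWittVector p n R) (TruncatedWittVector p n S) := by
    refine Module.Flat.of_forall_isTrivialRelation fun {l f' x'} h ↦ ?_
    choose f hf using fun i ↦ hR (f' i)
    choose x hx using fun i ↦ hS (x' i)
    have hdvd : φ (p : WittVector p R) ^ n ∣ ∑ i, φ (f i) * x i := by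
      rw [hφp, ← truncate_eq_zero_iff_pow_dvd]
      simpa [Algebra.smul_def, halg, ← hf, ← hx, hg] using h
    obtain ⟨k, a, y, hxy, ha⟩ := exists_trivial_mod_pow (R := R) (S := S) φ
      WittVector.constantCoeff WittVector.constantCoeff
      (WittVector.constantCoeff_surjective p) (WittVector.constantCoeff_surjective p)
      (fun a ↦ WittVector.map_coeff _ a 0) p
      (fun a ↦ (coeff_zero_eq_zero_iff_dvd p R a).1)
      (fun b ↦ by rw [hφp]; exact coeff_zero_eq_zero_iff_dvd p S b)
      (fun b hb ↦ WittVector.eq_zero_of_p_mul_eq_zero b (by rwa [mul_comm, ← hφp]))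
      n f x hdvd
    refine ⟨k, fun i j ↦ WittVector.truncate n (a i j), fun j ↦ WittVector.truncate n (y j),
      fun i ↦ ?_, fun j ↦ ?_⟩
    · simp [← hx, hxy i, Algebra.smul_def, halg, hg]
    · simpa [hf] using (truncate_eq_zero_iff_pow_dvd p R n _).2 (ha j)
  obtain ⟨σ, hσ⟩ := exists_truncated_constantCoeff p R hn
  obtain ⟨τ, hτ⟩ := exists_truncated_constantCoeff p S hn
  refine faithfullyFlat_of_nil_ker σ τ (fun r ↦ ?_) (fun a ↦ ?_) (fun a ha ↦ ⟨n, ?_⟩)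
  · obtain ⟨x, rfl⟩ := WittVector.constantCoeff_surjective p r
    exact ⟨_, hσ x⟩
  · obtain ⟨x, rfl⟩ := hR a
    rw [halg, hg, hτ, hσ]
    exact WittVector.map_coeff _ x 0
  · obtain ⟨x, rfl⟩ := hR a
    rw [hσ, coeff_zero_eq_zero_iff_dvd] at ha
    rw [← map_pow, truncate_eq_zero_iff_pow_dvd]
    exact pow_dvd_pow_of_dvd ha n
end

section
/- Let p be a prime, let R be a perfect commutative ring of characteristic p, and let α be a unit of the Laurent series ring R((t)). Then for every integer l, the set { x ∈ PrimeSpectrum R | coeff_n(α) ∈ x for all integers n < l } is both open and closed in PrimeSpectrum R. (Equivalently: the function sending a prime x to the t-adic valuation of the image of α in k(x)((t)), where k(x) is the residue field at x, is locally constant on Spec R.) -/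
/-!
Let `β = α⁻¹`. For a prime `x`, the images of `α` and `β` in `(R ⧸ x)((t))` are mutually inverse,
and since `R ⧸ x` is a domain their `t`-adic orders are opposite. Hence `ord_x α ≥ l` holds exactly
when `ord_x β ≥ 1 - l` fails. Both conditions define zero loci of sets of coefficients, which are
closed, so the locus of `x` with `ord_x α ≥ l` is closed with closed complement. The argument
applies to every commutative ring, perfect or not.
-/

/-- The locus where all coefficients of `γ` of index less than `l` vanish is closed. -/
lemma isClosed_coeff_vanishing {R : Type*} [CommRing R] (γ : LaurentSeries R) (l : ℤ) :
    IsClosed {x : PrimeSpectrum R | ∀ n : ℤ, n < l → γ.coeff n ∈ x.asIdeal} := by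
  convert PrimeSpectrum.isClosed_zeroLocus (γ.coeff '' Set.Iio l) using 1
  ext x
  simp [PrimeSpectrum.mem_zeroLocus, Set.subset_def]

/-- The relation `ord_x α = -ord_x α⁻¹` at a prime `x`, phrased through vanishing coefficients. -/
lemma coeff_vanishing_iff_not_inv {R : Type*} [CommRing R] (α : (LaurentSeries R)ˣ) (l : ℤ)
    (x : PrimeSpectrum R) :
    (∀ n : ℤ, n < l → (α : LaurentSeries R).coeff n ∈ x.asIdeal) ↔
      ¬ ∀ n : ℤ, n < 1 - l → (↑α⁻¹ : LaurentSeries R).coeff n ∈ x.asIdeal := by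
  let f := Ideal.Quotient.mk x.asIdeal
  let A : HahnSeries ℤ (R ⧸ x.asIdeal) := HahnSeries.map (α : LaurentSeries R) f
  let B : HahnSeries ℤ (R ⧸ x.asIdeal) := HahnSeries.map (↑α⁻¹ : LaurentSeries R) f
  have hAB : A * B = 1 := by
    have h := HahnSeries.map_mul (f : R →ₙ+* R ⧸ x.asIdeal)
      (x := (α : LaurentSeries R)) (y := (↑α⁻¹ : LaurentSeries R))
    rw [Units.mul_inv] at h
    exact h.symm.trans (HahnSeries.map_one f.toMonoidWithZeroHom)
  have hA : A ≠ 0 := left_ne_zero_of_mul_eq_one hAB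
  have hB : B ≠ 0 := right_ne_zero_of_mul_eq_one hAB
  have hord : A.order + B.order = 0 := by
    rw [← HahnSeries.order_mul hA hB, hAB, HahnSeries.order_one]
  have h1 := HahnSeries.le_order_iff_forall (i := l) hA
  have h2 := HahnSeries.le_order_iff_forall (i := 1 - l) hB
  simp only [A, B, f, HahnSeries.map_coeff, Ideal.Quotient.eq_zero_iff_mem] at h1 h2
  rw [← h1, ← h2]
  change l ≤ A.order ↔ ¬ 1 - l ≤ B.order
  omega


/-- Let `p` be a prime, let `R` be a perfect commutative ring of characteristic `p`, and let
`α` be a unit of the Laurent series ring `R((t))`. Then for every integer `l`, the set of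
primes `x` of `R` at which all coefficients `coeff_n(α)` with `n < l` vanish is both open
and closed in `Spec R`. -/
theorem stmt_6 (p : ℕ) [Fact p.Prime] (R : Type*) [CommRing R] [CharP R p] [PerfectRing R p]
    (α : (LaurentSeries R)ˣ) (l : ℤ) :
    IsClopen {x : PrimeSpectrum R |
      ∀ n : ℤ, n < l → (α : LaurentSeries R).coeff n ∈ x.asIdeal} := by
  refine ⟨isClosed_coeff_vanishing _ l, ?_⟩
  simp_rw [coeff_vanishing_iff_not_inv α l]
  exact (isClosed_coeff_vanishing (↑α⁻¹ : LaurentSeries R) (1 - l)).isOpen_compl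
end

section
/- Let p be a prime, let R be a perfect commutative ring of characteristic p, and let α be a unit of the Laurent series ring R((t)). Suppose that for every prime ideal x of R one has coeff_n(α) ∈ x for all n < 0 and coeff_0(α) ∉ x. Then coeff_n(α) = 0 for all n < 0 and coeff_0(α) is a unit of R; consequently α lies in the image of the canonical map from the unit group of R[[t]] to the unit group of R((t)). -/
/-!
A coefficient lying in every prime ideal is nilpotent, and a perfect ring is reduced because its
Frobenius is injective; hence the negative coefficients vanish. An element lying in no prime ideal
lies in no maximal ideal, so the constant coefficient is a unit. A Laurent series without negative
part is a power series, and a power series with unit constant coefficient is a unit.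
-/

/-- Let `p` be a prime, let `R` be a perfect commutative ring of characteristic `p`, and let
`α` be a unit of `R((t))`. Suppose that for every prime ideal `x` of `R` one has
`coeff_n(α) ∈ x` for all `n < 0` and `coeff_0(α) ∉ x`. Then `coeff_n(α) = 0` for all `n < 0`
and `coeff_0(α)` is a unit of `R`; consequently `α` lies in the image of the canonical map
`R[[t]]ˣ → R((t))ˣ`. -/
theorem stmt_7 (p : ℕ) [Fact p.Prime] (R : Type*) [CommRing R] [CharP R p] [PerfectRing R p]
    (α : (LaurentSeries R)ˣ)
    (h : ∀ x : PrimeSpectrum R,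
      (∀ n : ℤ, n < 0 → (α : LaurentSeries R).coeff n ∈ x.asIdeal) ∧
        (α : LaurentSeries R).coeff 0 ∉ x.asIdeal) :
    (∀ n : ℤ, n < 0 → (α : LaurentSeries R).coeff n = 0) ∧
      IsUnit ((α : LaurentSeries R).coeff 0) ∧
      ∃ u : (PowerSeries R)ˣ,
        Units.map (HahnSeries.ofPowerSeries ℤ R).toMonoidHom u = α := by
  have hred : IsReduced R := by
    refine ⟨fun x ⟨n, hn⟩ => ?_⟩
    -- Since `n < p ^ n`, the `n`-th iterate of the injective Frobenius kills `x`.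
    have hx : x ^ p ^ n = 0 :=
      pow_eq_zero_of_le (Nat.lt_pow_self (Fact.out : p.Prime).one_lt).le hn
    apply (bijective_iterateFrobenius R p n).1
    rw [iterateFrobenius_def, hx, map_zero]
  have hneg : ∀ n : ℤ, n < 0 → (α : LaurentSeries R).coeff n = 0 := fun n hn =>
    (nilpotent_iff_mem_prime.mpr fun J hJ => (h ⟨J, hJ⟩).1 n hn).eq_zero
  have hunit : IsUnit ((α : LaurentSeries R).coeff 0) := by
    by_contra hc
    obtain ⟨M, hM, hmem⟩ := exists_max_ideal_of_mem_nonunits hc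
    exact (h ⟨M, hM.isPrime⟩).2 hmem
  refine ⟨hneg, hunit, ?_⟩
  have hf : IsUnit (PowerSeries.mk fun n : ℕ => (α : LaurentSeries R).coeff n) := by
    rw [PowerSeries.isUnit_iff_constantCoeff]
    simpa using hunit
  refine ⟨hf.unit, Units.ext ?_⟩
  change HahnSeries.ofPowerSeries ℤ R (PowerSeries.mk fun n : ℕ => (α : LaurentSeries R).coeff n)
    = (α : LaurentSeries R)
  ext n
  rw [PowerSeries.coeff_coe]
  split_ifs with hn
  · exact (hneg n hn).symm
  · rw [PowerSeries.coeff_mk, Int.natAbs_of_nonneg (not_lt.mp hn)]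
end

section
/- Let p be a prime and let R be a perfect commutative ring of characteristic p, nonzero, whose prime spectrum Spec R is connected. Then every unit α of the Laurent series ring R((t)) can be written uniquely in the form α = t^m · u, where m is an integer and u is a unit of R((t)) lying in the image of the unit group of R[[t]]. (Equivalently: the sequence 1 → R[[t]]ˣ → R((t))ˣ → ℤ → 0 given by the valuation is split exact.) -/
/-!
For a prime `P` of `R`, reduce a unit `α` of `R((t))` and its inverse `β` modulo `P`. Over the
domain `R / P` orders of Laurent series add up, so `ord_P α + ord_P β = 0`
(`exists_order_at_prime`). The condition `ord_P α ≤ n` says that some coefficient of `α` of degree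
at most `n` is not in `P`, which is open in `P`; its negation `ord_P α ≥ n + 1` is the condition
`ord_P β ≤ -n - 1`, which is open too. So `P ↦ ord_P α` is locally constant, hence constant, equal
to some `m`, as `Spec R` is connected. The coefficients of `α` of degree less than `m` lie in all
primes, hence vanish because a perfect ring is reduced; the coefficient of degree `m` lies in no
prime, hence is a unit (`exists_isUnit_coeff`). This makes `t⁻ᵐ α` a unit of `R[[t]]`. Uniqueness
holds because `m` is recovered as the degree of the lowest nonzero coefficient of `tᵐ u`.
-/

open HahnSeries

/-- The order of `α` modulo the prime `P` is an integer `m`, and that of its inverse is `-m`. -/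
lemma exists_order_at_prime {R : Type*} [CommRing R] {α β : LaurentSeries R} (h : α * β = 1)
    (P : Ideal R) [P.IsPrime] :
    ∃ m : ℤ, (α.coeff m ∉ P ∧ ∀ i < m, α.coeff i ∈ P) ∧
      (β.coeff (-m) ∉ P ∧ ∀ i < -m, β.coeff i ∈ P) := by
  let q := Ideal.Quotient.mk P
  have h1 : α.map q * β.map q = 1 := by
    calc
      _ = (α * β).map q := (HahnSeries.map_mul (q : R →ₙ+* R ⧸ P)).symm
      _ = 1 := by rw [h]; exact HahnSeries.map_one q.toMonoidWithZeroHom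
  have ha : α.map q ≠ 0 := left_ne_zero_of_mul_eq_one h1
  have hb : β.map q ≠ 0 := right_ne_zero_of_mul_eq_one h1
  have ho : (α.map q).order + (β.map q).order = 0 := by
    rw [← HahnSeries.order_mul ha hb, h1, HahnSeries.order_one]
  have key (γ : LaurentSeries R) (hγ : γ.map q ≠ 0) :
      γ.coeff (γ.map q).order ∉ P ∧ ∀ i < (γ.map q).order, γ.coeff i ∈ P := by
    constructor
    · intro hm
      have := HahnSeries.coeff_order_eq_zero.not.mpr hγ
      exact this (by simpa [q] using Ideal.Quotient.eq_zero_iff_mem.mpr hm)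
    · intro i hi
      have := HahnSeries.coeff_eq_zero_of_lt_order hi
      exact Ideal.Quotient.eq_zero_iff_mem.mp (by simpa [q] using this)
  refine ⟨(α.map q).order, key α ha, ?_⟩
  rw [neg_eq_of_add_eq_zero_right ho]
  exact key β hb

lemma isOpen_exists_coeff_notMem {R : Type*} [CommRing R] (α : LaurentSeries R) (n : ℤ) :
    IsOpen {P : PrimeSpectrum R | ∃ i ≤ n, α.coeff i ∉ P.asIdeal} := by
  have : {P : PrimeSpectrum R | ∃ i ≤ n, α.coeff i ∉ P.asIdeal} =
      ⋃ i ≤ n, (PrimeSpectrum.basicOpen (α.coeff i) : Set (PrimeSpectrum R)) := by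
    ext P
    simp
  rw [this]
  exact isOpen_biUnion fun i _ => (PrimeSpectrum.basicOpen (α.coeff i)).isOpen

/-- Over a reduced ring with connected spectrum, an invertible Laurent series has an invertible
lowest coefficient. -/
lemma exists_isUnit_coeff {R : Type*} [CommRing R] [IsReduced R]
    [ConnectedSpace (PrimeSpectrum R)] {α β : LaurentSeries R} (h : α * β = 1) :
    ∃ m : ℤ, IsUnit (α.coeff m) ∧ ∀ i < m, α.coeff i = 0 := by
  have clopen (n : ℤ) :
      IsClopen {P : PrimeSpectrum R | ∃ i ≤ n, α.coeff i ∉ P.asIdeal} := by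
    refine ⟨⟨?_⟩, isOpen_exists_coeff_notMem α n⟩
    convert isOpen_exists_coeff_notMem β (-n - 1) using 1
    ext P
    obtain ⟨m, ⟨h1, h2⟩, h3, h4⟩ := exists_order_at_prime h P.asIdeal
    simp only [Set.mem_compl_iff, Set.mem_ofPred_eq]
    constructor
    · intro hn
      refine ⟨-m, ?_, h3⟩
      by_contra hlt
      exact hn ⟨m, by omega, h1⟩
    · rintro ⟨j, hj, hjP⟩ ⟨i, hi, hiP⟩
      have hj' : -m ≤ j := not_lt.mp fun hlt => hjP (h4 j hlt)
      have hi' : m ≤ i := not_lt.mp fun hlt => hiP (h2 i hlt)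
      omega
  obtain ⟨P₀⟩ := (inferInstance : Nonempty (PrimeSpectrum R))
  obtain ⟨m, ⟨h1, h2⟩, -⟩ := exists_order_at_prime h P₀.asIdeal
  have huniv := (isClopen_iff.mp (clopen m)).resolve_left
    (Set.Nonempty.ne_empty ⟨P₀, m, le_rfl, h1⟩)
  have hempty := (isClopen_iff.mp (clopen (m - 1))).resolve_right fun hu => by
    obtain ⟨i, hi, hiP⟩ := hu.symm ▸ Set.mem_univ P₀
    exact hiP (h2 i (by omega))
  have hlow (P : PrimeSpectrum R) (i : ℤ) (hi : i < m) : α.coeff i ∈ P.asIdeal := by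
    by_contra hiP
    exact (Set.ext_iff.mp hempty P).mp ⟨i, by omega, hiP⟩
  refine ⟨m, ?_, fun i hi => ?_⟩
  · by_contra hu
    obtain ⟨M, hM, hmM⟩ := exists_max_ideal_of_mem_nonunits hu
    obtain ⟨i, hi, hiP⟩ := (Set.ext_iff.mp huniv ⟨M, hM.isPrime⟩).mpr trivial
    rcases hi.lt_or_eq with hlt | rfl
    · exact hiP (hlow _ i hlt)
    · exact hiP hmM
  · refine IsNilpotent.eq_zero ?_
    rw [nilpotent_iff_mem_prime]
    exact fun J hJ => hlow ⟨J, hJ⟩ i hi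

lemma coeff_single_mul_ofPowerSeries {R : Type*} [CommRing R] (m k : ℤ) (f : PowerSeries R) :
    (single m (1 : R) * ofPowerSeries ℤ R f : LaurentSeries R).coeff k =
      if k < m then 0 else PowerSeries.coeff (k - m).natAbs f := by
  have h := HahnSeries.coeff_single_mul_add (r := (1 : R)) (x := ofPowerSeries ℤ R f)
    (a := k - m) (b := m)
  rw [sub_add_cancel, one_mul] at h
  rw [h, PowerSeries.coeff_coe]
  simp

theorem stmt_8 (p : ℕ) [Fact p.Prime] (R : Type*) [CommRing R] [CharP R p] [PerfectRing R p]
    [Nontrivial R] [ConnectedSpace (PrimeSpectrum R)] (α : (LaurentSeries R)ˣ) :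
    ∃! mu : ℤ × (PowerSeries R)ˣ,
      (α : LaurentSeries R) =
        HahnSeries.single mu.1 (1 : R) * HahnSeries.ofPowerSeries ℤ R (mu.2 : PowerSeries R) := by
  have : IsReduced R := by
    refine (isReduced_iff_pow_one_lt p (Fact.out : p.Prime).one_lt).mpr fun x hx => ?_
    exact injective_pow_p R p (by rw [hx, zero_pow (Fact.out : p.Prime).ne_zero])
  obtain ⟨m, hm, hlow⟩ := exists_isUnit_coeff α.mul_inv
  refine existsUnique_of_exists_of_unique ?_ ?_
  · have hf : IsUnit (PowerSeries.mk fun n : ℕ => (α : LaurentSeries R).coeff (m + n)) := by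
      rw [PowerSeries.isUnit_iff_constantCoeff]
      simpa using hm
    refine ⟨(m, hf.unit), ?_⟩
    ext k
    rw [coeff_single_mul_ofPowerSeries]
    split_ifs with hk
    · exact hlow k hk
    · rw [IsUnit.unit_spec, PowerSeries.coeff_mk]
      congr 1
      omega
  · have deg {n : ℤ} {u : (PowerSeries R)ˣ}
        (h : (α : LaurentSeries R) = single n (1 : R) * ofPowerSeries ℤ R (u : PowerSeries R)) :
        n = m := by
      have hn : IsUnit ((α : LaurentSeries R).coeff n) := by
        rw [h, coeff_single_mul_ofPowerSeries]
        simpa using PowerSeries.isUnit_iff_constantCoeff.mp u.isUnit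
      refine le_antisymm (not_lt.mp fun hlt => hm.ne_zero ?_)
        (not_lt.mp fun hlt => hn.ne_zero (hlow n hlt))
      rw [h, coeff_single_mul_ofPowerSeries, if_pos hlt]
    rintro ⟨n, u⟩ ⟨n', u'⟩ h h'
    dsimp only at h h'
    obtain rfl : n = n' := (deg h).trans (deg h').symm
    rw [h] at h'
    have hs : IsUnit (single n (1 : R) : LaurentSeries R) :=
      IsUnit.of_mul_eq_one (single (-n) (1 : R)) (by simp [single_mul_single])
    rw [Prod.mk.injEq]
    exact ⟨rfl, Units.ext (ofPowerSeries_injective (hs.mul_left_cancel h'))⟩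
end
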